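/- Let n ≡ 2 (mod 4) and let I ⊆ [n-1] have an odd number of odd elements. Then β^cyc_n(I) - β^cyc_n([n-1] \ I) = β^cyc_{n/2}(I/2), where I/2 = {i/2 : i ∈ I, i even}. -/

import Mathlib

/-!
Cut `[n]` into blocks (intervals) after each element of `J`. A permutation has its descents in `J`
iff it is increasing on blocks, and such permutations are in bijection with the words of length `n`
that contain the `v`-th letter as often as the `v`-th block has elements (`words_bij`).

An `n`-cycle `π` with a starting point `x` gives the cyclic word of blocks visited by
`x, π x, π² x, …`. If `π` is increasing on blocks, then two points of the orbit are ordered like the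
corresponding suffixes of the word in lexicographic order, so the word is primitive and determines
`(π, x)`; conversely ranking the suffixes of a primitive word produces such a pair
(`primWords_bij`). This is the Gessel–Reutenauer correspondence for full cycles. A general word is
a `d`-fold repetition of a primitive one, whence (`alphaP_eq`)
`α_n(J) = ∑_d (n/d) α^cyc_{n/d}(J/d)`, the sum being over the `d ∣ n` dividing all elements of `J`.

Inclusion–exclusion turns this into (`sbetaP_eq_sum`)
`(-1)^|I| β_n(I) = ∑_{d ∣ n} (n/d) (-1)^|I/d| β^cyc_{n/d}(I/d)`.
Reversing the values of a permutation shows `β_n(I) = β_n([n-1] \ I)`, and comparing the two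
expansions gives a linear relation among the cyclic counts (`sum_compl`). By strong induction it
yields `β^cyc_n(I) = β^cyc_n([n-1] \ I)` for odd `n` (`sbetaC_compl_odd`). For `n = 2m` with `m` odd
the divisors of `n` are paired as `d, 2d` with `d ∣ m`, and induction gives the claim up to the sign
`(-1)^(|I| - |I/2|)` (`sbetaC_compl_two_mul`), whose exponent is the number of odd elements of `I`.
-/

open Finset

/-- The value `π(i)` of a permutation of `[n]`, in 1-based position notation. -/
def permVal {n : ℕ} (π : Equiv.Perm (Fin n)) (i : ℕ) : ℕ :=
  if h : i - 1 < n then ((π ⟨i - 1, h⟩ : Fin n) : ℕ) else 0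

/-- The descent set `D(π) = {i ∈ [n-1] : π(i) > π(i+1)}` (1-based). -/
def descSet {n : ℕ} (π : Equiv.Perm (Fin n)) : Finset ℕ :=
  (Finset.Ioo 0 n).filter fun i => permVal π (i + 1) < permVal π i

/-- `π` is an `n`-cycle: a permutation of `[n]` consisting of a single cycle of length `n`. -/
def IsFullCycle {n : ℕ} (π : Equiv.Perm (Fin n)) : Prop :=
  ∀ x y : Fin n, ∃ k : ℕ, (π ^ k) x = y

/-- `α_n(I)`: number of permutations of `[n]` with descent set contained in `I`. -/
noncomputable def alphaP (n : ℕ) (I : Finset ℕ) : ℕ :=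
  Nat.card {π : Equiv.Perm (Fin n) // descSet π ⊆ I}

/-- `α^cyc_n(I)`: number of `n`-cycles with descent set contained in `I`. -/
noncomputable def alphaC (n : ℕ) (I : Finset ℕ) : ℕ :=
  Nat.card {π : Equiv.Perm (Fin n) // IsFullCycle π ∧ descSet π ⊆ I}

/-- `β_n(I)`: number of permutations of `[n]` with descent set exactly `I`. -/
noncomputable def betaP (n : ℕ) (I : Finset ℕ) : ℕ :=
  Nat.card {π : Equiv.Perm (Fin n) // descSet π = I}

/-- `β^cyc_n(I)`: number of `n`-cycles with descent set exactly `I`. -/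
noncomputable def betaC (n : ℕ) (I : Finset ℕ) : ℕ :=
  Nat.card {π : Equiv.Perm (Fin n) // IsFullCycle π ∧ descSet π = I}

/-- `I/d = {i/d : i ∈ I, d ∣ i}`. -/
def divSet (I : Finset ℕ) (d : ℕ) : Finset ℕ :=
  (I.filter fun i => d ∣ i).image (· / d)


/-! ### Permutations and words with prescribed content -/

/-- The index of the block containing the (0-based) position `x`, when the positions are cut into
intervals after each (1-based) position in `J`. -/
def blk (J : Finset ℕ) (x : ℕ) : ℕ := (J.filter (· ≤ x)).card

lemma blk_mono (J : Finset ℕ) : Monotone (blk J) := by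
  intro x y h
  apply Finset.card_le_card
  intro i
  simp only [Finset.mem_filter]
  rintro ⟨a, b⟩
  exact ⟨a, b.trans h⟩

lemma blk_lt {J : Finset ℕ} {x y j : ℕ} (hj : j ∈ J) (h1 : x < j) (h2 : j ≤ y) :
    blk J x < blk J y := by
  apply Finset.card_lt_card
  rw [Finset.ssubset_iff_of_subset]
  · exact ⟨j, by simp [hj, h2], by simp [h1]⟩
  · intro i
    simp only [Finset.mem_filter]
    rintro ⟨a, b⟩
    exact ⟨a, by omega⟩

lemma mem_descSet {n : ℕ} (π : Equiv.Perm (Fin n)) (i : ℕ) :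
    i ∈ descSet π ↔ ∃ (h0 : 0 < i) (h : i < n), π ⟨i, h⟩ < π ⟨i - 1, by omega⟩ := by
  unfold descSet permVal
  simp only [Finset.mem_filter, Finset.mem_Ioo]
  constructor
  · rintro ⟨⟨h0, h1⟩, h2⟩
    refine ⟨h0, h1, ?_⟩
    have h3 : i - 1 < n := by omega
    simpa [h1, h3] using h2
  · rintro ⟨h0, h1, h2⟩
    refine ⟨⟨h0, h1⟩, ?_⟩
    have h3 : i - 1 < n := by omega
    simpa [h1, h3] using h2

lemma descSet_subset_Ioo {n : ℕ} (π : Equiv.Perm (Fin n)) : descSet π ⊆ Finset.Ioo 0 n :=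
  Finset.filter_subset _ _

/-- The descents of `π` lie in `J` iff `π` is increasing on each block. -/
lemma descSet_subset_iff {n : ℕ} (π : Equiv.Perm (Fin n)) (J : Finset ℕ) :
    descSet π ⊆ J ↔ ∀ x y : Fin n, x < y → blk J x = blk J y → π x < π y := by
  constructor
  · intro h
    have key : ∀ y : ℕ, ∀ hy : y < n, ∀ x : Fin n, (x : ℕ) < y → blk J x = blk J y →
        π x < π ⟨y, hy⟩ := by
      intro y
      induction y with
      | zero => intro _ x hx; omega
      | succ z ih =>
        intro hy x hx hb
        have hz : blk J z = blk J (z + 1) :=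
          le_antisymm (blk_mono J (by omega)) (hb ▸ blk_mono J (by omega))
        have hzJ : z + 1 ∉ J := fun hm => (blk_lt hm (by omega) le_rfl).ne hz
        have h2 : π ⟨z, by omega⟩ < π ⟨z + 1, hy⟩ := by
          refine lt_of_le_of_ne ?_ ?_
          · by_contra hc
            refine hzJ (h ((mem_descSet π _).2 ⟨by omega, hy, ?_⟩))
            simpa using hc
          · intro he
            have := π.injective he
            simp at this
        rcases Nat.lt_or_ge x z with h3 | h3
        · exact (ih (by omega) x h3 (hb.trans hz.symm)).trans h2
        · have : x = ⟨z, by omega⟩ := Fin.ext (by simp; omega)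
          rw [this]; exact h2
    intro x y hxy hb
    exact key y y.2 x hxy hb
  · intro h i hi
    obtain ⟨h0, h1, h2⟩ := (mem_descSet π i).1 hi
    by_contra hJ
    refine lt_asymm h2 (h _ _ ?_ ?_)
    · rw [Fin.lt_def]; simp; omega
    · simp only [blk]
      congr 1
      apply Finset.filter_congr
      intro j hj
      have : j ≠ i := fun e => hJ (e ▸ hj)
      omega

/-- Infinite words with period `n` in which each period contains every letter `v` exactly as often
as there are positions in the `v`-th block determined by `J`. -/
def words (n : ℕ) (J : Finset ℕ) : Set (ℕ → ℕ) :=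
  {u | Function.Periodic u n ∧ (Multiset.range n).map u = (Multiset.range n).map (blk J)}

/-- The words in `words n J` whose set of periods is exactly the set of multiples of `n`
(aperiodic necklaces with a marked starting point). -/
def primWords (n : ℕ) (J : Finset ℕ) : Set (ℕ → ℕ) :=
  {u | u ∈ words n J ∧ ∀ p, Function.Periodic u p → n ∣ p}

lemma map_fin_eq {n : ℕ} (u : ℕ → ℕ) :
    (Finset.univ : Finset (Fin n)).val.map (fun i : Fin n => u i) = (Multiset.range n).map u := by
  have h : (Finset.univ : Finset (Fin n)).val.map (fun i : Fin n => (i : ℕ)) = Multiset.range n := by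
    rw [Fin.univ_val_map, List.ofFn_eq_map, List.map_coe_finRange_eq_range]
    rfl
  rw [← h, Multiset.map_map]
  rfl

lemma map_perm {n : ℕ} (τ : Equiv.Perm (Fin n)) (f : Fin n → ℕ) :
    (Finset.univ : Finset (Fin n)).val.map (f ∘ τ) = Finset.univ.val.map f := by
  rw [← Multiset.map_map]
  congr 1
  simp

lemma monotone_eq {n : ℕ} {f g : Fin n → ℕ} (hf : Monotone f) (hg : Monotone g)
    (h : (Finset.univ : Finset (Fin n)).val.map f = Finset.univ.val.map g) : f = g := by
  rw [Fin.univ_val_map, Fin.univ_val_map, Multiset.coe_eq_coe] at h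
  apply List.ofFn_injective
  refine List.Perm.eq_of_pairwise' (r := (· ≤ ·)) ?_ ?_ h
  · exact hf.sortedLE_ofFn.pairwise
  · exact hg.sortedLE_ofFn.pairwise

/-- The word attached to the permutation `τ`: the letter at `i` is the block of `τ⁻¹ i`, the index
`i` being reduced modulo `n`. -/
def word {n : ℕ} [NeZero n] (J : Finset ℕ) (τ : Equiv.Perm (Fin n)) : ℕ → ℕ :=
  fun i => blk J (τ⁻¹ (Fin.ofNat n i) : Fin n)

lemma word_mem {n : ℕ} [NeZero n] (J : Finset ℕ) (τ : Equiv.Perm (Fin n)) :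
    word J τ ∈ words n J := by
  refine ⟨fun i => ?_, ?_⟩
  · have : Fin.ofNat n (i + n) = Fin.ofNat n i := Fin.ext (by simp)
    simp only [word, this]
  · rw [← map_fin_eq, ← map_fin_eq, ← map_perm τ⁻¹ (fun i : Fin n => blk J i)]
    congr 1
    funext i
    simp [word]

lemma word_apply {n : ℕ} [NeZero n] (J : Finset ℕ) (τ : Equiv.Perm (Fin n)) (x : Fin n) :
    word J τ (τ x : Fin n) = blk J x := by
  simp [word]

/-- A word with the right content that becomes weakly increasing after rearrangement by `τ`
is the word of `τ`. -/
lemma eq_word {n : ℕ} [NeZero n] {J : Finset ℕ} {u : ℕ → ℕ} (hu : u ∈ words n J)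
    (τ : Equiv.Perm (Fin n)) (hm : Monotone fun x : Fin n => u (τ x : Fin n)) : word J τ = u := by
  have h : (fun x : Fin n => u (τ x : Fin n)) = fun x : Fin n => blk J x := by
    apply monotone_eq hm (fun x y hxy => blk_mono J hxy)
    have h1 := map_perm τ (fun i : Fin n => u i)
    rw [map_fin_eq, hu.2, ← map_fin_eq] at h1
    exact h1
  funext i
  have h1 := congrFun h (τ⁻¹ (Fin.ofNat n i))
  rw [← Equiv.Perm.mul_apply, mul_inv_cancel, Equiv.Perm.one_apply, Fin.val_ofNat] at h1
  rw [hu.1.map_mod_nat] at h1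
  exact h1.symm

/-- Permutations with descent set contained in `J` correspond to words: `τ` is recovered from its
word `i ↦ blk J (τ⁻¹ i)` as the stable sorting permutation. -/
lemma words_bij {n : ℕ} [NeZero n] (J : Finset ℕ) :
    Set.BijOn (word J) {τ : Equiv.Perm (Fin n) | descSet τ ⊆ J} (words n J) := by
  refine ⟨fun τ _ => word_mem J τ, ?_, ?_⟩
  · have key : ∀ τ : Equiv.Perm (Fin n), descSet τ ⊆ J →
        τ = Tuple.sort (fun i : Fin n => word J τ i) := by
      intro τ h
      rw [Tuple.eq_sort_iff]
      refine ⟨fun x y hxy => ?_, fun x y hxy hb => ?_⟩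
      · simp only [Function.comp, word_apply]
        exact blk_mono J hxy
      · simp only [word_apply] at hb
        exact (descSet_subset_iff τ J).1 h x y hxy hb
    intro τ hτ σ hσ h
    rw [key τ hτ, key σ hσ, h]
  · intro u hu
    have hs := (Tuple.eq_sort_iff (f := fun i : Fin n => u i)).1 rfl
    have hw := eq_word hu _ hs.1
    refine ⟨Tuple.sort (fun i : Fin n => u i), ?_, hw⟩
    refine (descSet_subset_iff _ J).2 ?_
    intro x y hxy hb
    apply hs.2 x y hxy
    rw [← word_apply J (Tuple.sort (fun i : Fin n => u i)),
      ← word_apply J (Tuple.sort (fun i : Fin n => u i)), hw] at hb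
    exact hb

lemma words_ncard {n : ℕ} [NeZero n] (J : Finset ℕ) : (words n J).ncard = alphaP n J := by
  rw [← (words_bij (n := n) J).image_eq, (words_bij J).injOn.ncard_image]
  rfl

lemma words_finite {n : ℕ} [NeZero n] (J : Finset ℕ) : (words n J).Finite := by
  rw [← (words_bij (n := n) J).image_eq]
  exact (Set.toFinite _).image _

/-! ### Cycles and primitive words -/

/-- The permutation `x ↦ τ⁻¹ (τ x + 1)`; as `τ` varies these are the `n`-cycles. -/
def cyc {n : ℕ} (τ : Equiv.Perm (Fin n)) : Equiv.Perm (Fin n) := τ⁻¹ * finRotate n * τ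

lemma finRotate_pow {n : ℕ} [NeZero n] (k : ℕ) (i : Fin n) :
    (finRotate n ^ k) i = Fin.ofNat n (i + k) := by
  induction k with
  | zero => apply Fin.ext; simp
  | succ k ih =>
    rw [pow_succ', Equiv.Perm.mul_apply, ih, finRotate_apply]
    apply Fin.ext
    simp [Fin.val_add, add_assoc]

lemma cyc_pow {n : ℕ} [NeZero n] (τ : Equiv.Perm (Fin n)) (k : ℕ) (x : Fin n) :
    (cyc τ ^ k) x = τ⁻¹ (Fin.ofNat n (τ x + k)) := by
  have h : cyc τ ^ k = τ⁻¹ * finRotate n ^ k * τ := by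
    induction k with
    | zero => simp
    | succ k ih => rw [pow_succ, ih, cyc, pow_succ]; group
  rw [h, Equiv.Perm.mul_apply, Equiv.Perm.mul_apply, finRotate_pow]

lemma cyc_isFullCycle {n : ℕ} [NeZero n] (τ : Equiv.Perm (Fin n)) : IsFullCycle (cyc τ) := by
  intro x y
  refine ⟨τ y + n - τ x, ?_⟩
  rw [cyc_pow]
  have : Fin.ofNat n (τ x + (τ y + n - τ x)) = τ y := by
    apply Fin.ext
    have h1 := (τ x).2
    have h2 := (τ y).2
    have h3 : (τ x : ℕ) + (τ y + n - τ x) = τ y + n := by omega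
    rw [h3]
    simp [Nat.mod_eq_of_lt h2]
  rw [this]
  simp

lemma word_add {n : ℕ} [NeZero n] (J : Finset ℕ) (τ : Equiv.Perm (Fin n)) (x : Fin n) (k : ℕ) :
    word J τ (τ x + k) = blk J ((cyc τ ^ k) x : Fin n) := by
  rw [cyc_pow, word]

/-- The suffix of the word `u` starting at `i`; suffixes are compared lexicographically. -/
def suffix (u : ℕ → ℕ) (i : ℕ) : Lex (ℕ → ℕ) := toLex fun k => u (i + k)

/-- If the cycle `cyc τ` is increasing on blocks, then `τ` lists the suffixes of its word in
increasing order: two orbits that start in the order `x < y` stay in that order as long as they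
visit the same blocks, and they cannot do so forever, since the orbit of `x` reaches the last
position. -/
lemma suffix_strictMono {n : ℕ} [NeZero n] {J : Finset ℕ} {τ : Equiv.Perm (Fin n)}
    (h : descSet (cyc τ) ⊆ J) :
    StrictMono fun x : Fin n => suffix (word J τ) (τ x : Fin n) := by
  intro x y hxy
  have step : ∀ k, (∀ j < k, blk J ((cyc τ ^ j) x : Fin n) = blk J ((cyc τ ^ j) y : Fin n)) →
      (cyc τ ^ k) x < (cyc τ ^ k) y := by
    intro k
    induction k with
    | zero => intro _; simpa using hxy
    | succ k ih =>
      intro hk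
      rw [pow_succ', Equiv.Perm.mul_apply, Equiv.Perm.mul_apply]
      exact (descSet_subset_iff _ J).1 h _ _ (ih fun j hj => hk j (by omega)) (hk k (by omega))
  have hex : ∃ k, blk J ((cyc τ ^ k) x : Fin n) ≠ blk J ((cyc τ ^ k) y : Fin n) := by
    by_contra hc
    push Not at hc
    have hpos := Nat.pos_of_ne_zero (NeZero.ne n)
    obtain ⟨k, hk⟩ := cyc_isFullCycle τ x ⟨n - 1, by omega⟩
    have h1 := step k fun j _ => hc j
    rw [hk, Fin.lt_def] at h1
    have h2 := ((cyc τ ^ k) y).2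
    simp only at h1
    omega
  classical
  have hmin : ∀ j < Nat.find hex,
      blk J ((cyc τ ^ j) x : Fin n) = blk J ((cyc τ ^ j) y : Fin n) := fun j hj => by
    simpa using Nat.find_min hex hj
  refine ⟨Nat.find hex, fun j hj => ?_, ?_⟩
  · simp only [suffix, toLex, word_add]
    exact hmin j hj
  · simp only [suffix, word_add]
    exact lt_of_le_of_ne (blk_mono J (step _ hmin).le) (Nat.find_spec hex)

lemma suffix_head_le {u : ℕ → ℕ} {i j : ℕ} (h : suffix u i ≤ suffix u j) : u i ≤ u j := by
  rcases h.lt_or_eq with h | h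
  · obtain ⟨k, h1, h2⟩ := h
    rcases Nat.eq_zero_or_pos k with rfl | hk
    · exact le_of_lt h2
    · exact (h1 0 hk).le
  · exact (congrFun h 0).le

lemma suffix_tail_lt {u : ℕ → ℕ} {i j : ℕ} (h : suffix u i < suffix u j) (he : u i = u j) :
    suffix u (i + 1) < suffix u (j + 1) := by
  obtain ⟨k, h1, h2⟩ := h
  have h1' : ∀ l < k, u (i + l) = u (j + l) := h1
  have h2' : u (i + k) < u (j + k) := h2
  rcases k with _ | k
  · simp [he] at h2'
  · refine ⟨k, fun l hl => ?_, ?_⟩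
    · show u (i + 1 + l) = u (j + 1 + l)
      have := h1' (l + 1) (by omega)
      rwa [add_assoc, add_comm 1 l, add_assoc, add_comm 1 l]
    · show u (i + 1 + k) < u (j + 1 + k)
      rwa [add_assoc, add_comm 1 k, add_assoc, add_comm 1 k]

lemma suffix_mod {u : ℕ → ℕ} {n : ℕ} (hu : Function.Periodic u n) (i : ℕ) :
    suffix u (i % n) = suffix u i := by
  funext k
  show u (i % n + k) = u (i + k)
  rw [← hu.map_mod_nat, Nat.mod_add_mod, hu.map_mod_nat]

/-- The permutations `τ` for which `cyc τ` has descents only in `J` correspond to primitive words: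
`τ` is recovered as the permutation sorting the suffixes of its word lexicographically. -/
lemma primWords_bij {n : ℕ} [NeZero n] (J : Finset ℕ) :
    Set.BijOn (word J) {τ : Equiv.Perm (Fin n) | descSet (cyc τ) ⊆ J} (primWords n J) := by
  have hpos := Nat.pos_of_ne_zero (NeZero.ne n)
  refine ⟨fun τ hτ => ⟨word_mem J τ, fun p hp => ?_⟩, ?_, ?_⟩
  · have hinj := (suffix_strictMono hτ).injective
    have h1 : suffix (word J τ) (p % n) = suffix (word J τ) 0 := by
      rw [suffix_mod (word_mem J τ).1]
      funext k
      show word J τ (p + k) = word J τ (0 + k)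
      rw [zero_add, add_comm, hp]
    have h2 : τ⁻¹ (Fin.ofNat n p) = τ⁻¹ (Fin.ofNat n 0) := by
      apply hinj
      simpa using h1
    have h3 := congrArg Fin.val (τ⁻¹.injective h2)
    simp only [Fin.val_ofNat, Nat.zero_mod] at h3
    exact Nat.dvd_of_mod_eq_zero h3
  · have key : ∀ τ : Equiv.Perm (Fin n), descSet (cyc τ) ⊆ J →
        τ = Tuple.sort (fun i : Fin n => suffix (word J τ) i) := by
      intro τ h
      rw [Tuple.eq_sort_iff]
      refine ⟨(suffix_strictMono h).monotone, fun x y hxy he => ?_⟩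
      exact absurd ((suffix_strictMono h).injective he) hxy.ne
    intro τ hτ σ hσ h
    rw [key τ hτ, key σ hσ, h]
  · rintro u ⟨hu, hp⟩
    have hinj : Function.Injective fun i : Fin n => suffix u i := by
      have key : ∀ i j : Fin n, i < j → suffix u i ≠ suffix u j := by
        intro i j hij he
        -- Equality of two suffixes makes the distance `j - i < n` a period.
        have hper : Function.Periodic u (j - i : ℕ) := by
          intro k
          -- Evaluating at `k + n * i - i` instead of `k - i` avoids truncated subtraction.
          have h1 : u (i + (k + n * i - i)) = u (j + (k + n * i - i)) := congrFun he _
          have h2 : (i : ℕ) ≤ n * i := Nat.le_mul_of_pos_left _ hpos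
          have h3 : (i : ℕ) < j := hij
          have e1 : (i : ℕ) + (k + n * i - i) = k + i * n := by
            rw [mul_comm n]; rw [mul_comm n] at h2; omega
          have e2 : (j : ℕ) + (k + n * i - i) = (k + (j - i)) + i * n := by
            rw [mul_comm n]; rw [mul_comm n] at h2; omega
          rw [e1, e2] at h1
          have hper := hu.1.nat_mul i
          simp only [Nat.cast_id] at hper
          rw [hper, hper] at h1
          exact h1.symm
        have := Nat.le_of_dvd (Nat.sub_pos_of_lt hij) (hp _ hper)
        have := j.2
        omega
      intro i j he
      rcases lt_trichotomy i j with h | h | h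
      · exact absurd he (key i j h)
      · exact h
      · exact absurd he.symm (key j i h)
    set τ : Equiv.Perm (Fin n) := Tuple.sort (fun i : Fin n => suffix u i) with hτ
    have hm : Monotone fun x : Fin n => suffix u (τ x : Fin n) :=
      Tuple.monotone_sort (fun i : Fin n => suffix u i)
    have hs : StrictMono fun x : Fin n => suffix u (τ x : Fin n) :=
      hm.strictMono_of_injective (hinj.comp τ.injective)
    have hw : word J τ = u := eq_word hu τ fun x y hxy => suffix_head_le (hm hxy)
    refine ⟨τ, (descSet_subset_iff _ J).2 ?_, hw⟩
    intro x y hxy hb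
    rw [← word_apply J τ, ← word_apply J τ, hw] at hb
    have h1 := suffix_tail_lt (hs hxy) hb
    have h2 : ∀ x, suffix u (τ (cyc τ x) : Fin n) = suffix u ((τ x : Fin n) + 1) := by
      intro x
      have := cyc_pow τ 1 x
      rw [pow_one] at this
      rw [this, ← Equiv.Perm.mul_apply, mul_inv_cancel, Equiv.Perm.one_apply, Fin.val_ofNat,
        suffix_mod hu.1]
    rw [← h2, ← h2] at h1
    exact hs.lt_iff_lt.1 h1

/-- An `n`-cycle together with a starting point is the same thing as a permutation `τ`, namely the
one with `τ⁻¹ i` the `i`-th point of the orbit. -/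
lemma cyc_bij {n : ℕ} [NeZero n] (P : Equiv.Perm (Fin n) → Prop) :
    Nat.card {τ : Equiv.Perm (Fin n) // P (cyc τ)} =
      n * Nat.card {π : Equiv.Perm (Fin n) // IsFullCycle π ∧ P π} := by
  have hprod : n * Nat.card {π : Equiv.Perm (Fin n) // IsFullCycle π ∧ P π} =
      Nat.card (Fin n × {π : Equiv.Perm (Fin n) // IsFullCycle π ∧ P π}) := by
    rw [Nat.card_prod, Nat.card_fin]
  rw [hprod]
  refine Nat.card_eq_of_bijective
    (fun τ => (τ.1⁻¹ 0, ⟨cyc τ.1, cyc_isFullCycle _, τ.2⟩)) ⟨?_, ?_⟩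
  · rintro ⟨τ, hτ⟩ ⟨σ, hσ⟩ h
    simp only [Prod.mk.injEq, Subtype.mk.injEq] at h
    obtain ⟨h0, h1⟩ := h
    apply Subtype.ext
    have key : ∀ (τ : Equiv.Perm (Fin n)) (i : Fin n), τ⁻¹ i = (cyc τ ^ (i : ℕ)) (τ⁻¹ 0) := by
      intro τ i
      rw [cyc_pow, ← Equiv.Perm.mul_apply τ, mul_inv_cancel, Equiv.Perm.one_apply]
      congr 1
      apply Fin.ext
      simp
    have : τ⁻¹ = σ⁻¹ := by
      ext i
      rw [key τ, key σ, h0, h1]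
    simpa using this
  · rintro ⟨x, π, hc, hP⟩
    have hcyc : π.IsCycleOn ((Finset.univ : Finset (Fin n)) : Set (Fin n)) := by
      refine ⟨by simp, fun a _ b _ => ?_⟩
      obtain ⟨k, hk⟩ := hc a b
      exact ⟨k, by simpa using hk⟩
    have hsurj : Function.Surjective fun i : Fin n => (π ^ (i : ℕ)) x := by
      intro y
      obtain ⟨k, hk, hy⟩ := hcyc.exists_pow_eq (Finset.mem_univ x) (Finset.mem_univ y)
      simp only [Finset.card_univ, Fintype.card_fin] at hk
      exact ⟨⟨k, hk⟩, hy⟩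
    have hn : ∀ y, (π ^ n) y = y := by
      intro y
      simpa using hcyc.pow_card_apply (Finset.mem_univ y)
    let e : Equiv.Perm (Fin n) :=
      Equiv.ofBijective _
        (Finite.injective_iff_bijective.1 (Finite.injective_iff_surjective.2 hsurj))
    have he : ∀ i : Fin n, e i = (π ^ (i : ℕ)) x := fun _ => rfl
    have hmod : ∀ k : ℕ, e (Fin.ofNat n k) = (π ^ k) x := by
      intro k
      rw [he, Fin.val_ofNat]
      conv_rhs => rw [← Nat.mod_add_div k n, pow_add, pow_mul]
      have h1 : π ^ n = 1 := Equiv.ext hn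
      rw [h1, one_pow, mul_one]
    have hcyc' : cyc e⁻¹ = π := by
      ext y
      obtain ⟨i, rfl⟩ := e.surjective y
      have h1 := cyc_pow e⁻¹ 1 (e i)
      rw [pow_one, ← Equiv.Perm.mul_apply e⁻¹, inv_mul_cancel, Equiv.Perm.one_apply, inv_inv,
        hmod] at h1
      rw [h1, he, add_comm, pow_add, pow_one, Equiv.Perm.mul_apply]
    refine ⟨⟨e⁻¹, by rw [hcyc']; exact hP⟩, ?_⟩
    simp only [inv_inv, hcyc', Prod.mk.injEq, and_true]
    rw [he]
    simp

lemma primWords_ncard {n : ℕ} [NeZero n] (J : Finset ℕ) :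
    (primWords n J).ncard = n * alphaC n J := by
  rw [← (primWords_bij (n := n) J).image_eq, (primWords_bij J).injOn.ncard_image]
  exact cyc_bij fun π => descSet π ⊆ J

/-! ### Sorting words by period -/

lemma map_range_periodic {u : ℕ → ℕ} {p : ℕ} (hu : Function.Periodic u p) (d : ℕ) :
    (Multiset.range (d * p)).map u = d • (Multiset.range p).map u := by
  induction d with
  | zero => simp
  | succ d ih =>
    rw [Nat.add_mul, one_mul, Multiset.range_add, Multiset.map_add, ih, succ_nsmul,
      Multiset.map_map]
    congr 1
    refine Multiset.map_congr rfl fun x _ => ?_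
    have := hu.nat_mul d x
    simp only [Nat.cast_id] at this
    simp only [Function.comp]
    rw [add_comm, this]

lemma mem_divSet {J : Finset ℕ} {d k : ℕ} (hd : 0 < d) : k ∈ divSet J d ↔ d * k ∈ J := by
  unfold divSet
  simp only [Finset.mem_image, Finset.mem_filter]
  constructor
  · rintro ⟨i, ⟨h1, h2⟩, rfl⟩
    rwa [Nat.mul_div_cancel' h2]
  · intro h
    exact ⟨d * k, ⟨h, dvd_mul_right _ _⟩, Nat.mul_div_cancel_left _ hd⟩

lemma blk_divSet {J : Finset ℕ} {d : ℕ} (hd : 0 < d) (hJ : ∀ j ∈ J, d ∣ j) {q r : ℕ}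
    (hr : r < d) : blk J (d * q + r) = blk (divSet J d) q := by
  unfold blk
  symm
  apply Finset.card_bij fun k _ => d * k
  · intro k hk
    simp only [Finset.mem_filter, mem_divSet hd] at hk ⊢
    exact ⟨hk.1, (Nat.mul_le_mul_left d hk.2).trans (Nat.le_add_right _ _)⟩
  · intro a _ b _ h
    exact Nat.eq_of_mul_eq_mul_left hd h
  · intro j hj
    simp only [Finset.mem_filter] at hj
    obtain ⟨k, rfl⟩ := hJ j hj.1
    refine ⟨k, ?_, rfl⟩
    simp only [Finset.mem_filter, mem_divSet hd]
    refine ⟨hj.1, ?_⟩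
    have h1 : d * k < d * (q + 1) := by rw [Nat.mul_add]; omega
    have := Nat.lt_of_mul_lt_mul_left h1
    omega

lemma map_range_blk {J : Finset ℕ} {d : ℕ} (hd : 0 < d) (hJ : ∀ j ∈ J, d ∣ j) (p : ℕ) :
    (Multiset.range (d * p)).map (blk J) = d • (Multiset.range p).map (blk (divSet J d)) := by
  induction p with
  | zero => simp
  | succ p ih =>
    rw [Nat.mul_add, mul_one, Multiset.range_add, Multiset.map_add, ih, Multiset.map_map,
      Multiset.range_succ, Multiset.map_cons, ← Multiset.singleton_add, nsmul_add, add_comm]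
    congr 1
    rw [Multiset.nsmul_singleton]
    rw [Multiset.map_congr rfl (g := fun _ => blk (divSet J d) p)]
    · simp
    · intro r hr
      exact blk_divSet hd hJ (Multiset.mem_range.1 hr)

/-- If every block size is a multiple of `d`, then so is every cut position. -/
lemma dvd_of_map_range_blk {J : Finset ℕ} {n d : ℕ} (hJn : J ⊆ Finset.Ioo 0 n) {s : Multiset ℕ}
    (h : (Multiset.range n).map (blk J) = d • s) : ∀ j ∈ J, d ∣ j := by
  intro j hj
  have h1 := congrArg (Multiset.countP (· < blk J j)) h
  rw [Multiset.countP_nsmul, Multiset.countP_map] at h1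
  have h2 : (Finset.range n).filter (fun x => blk J x < blk J j) = Finset.range j := by
    ext x
    have := Finset.mem_Ioo.1 (hJn hj)
    simp only [Finset.mem_filter, Finset.mem_range]
    constructor
    · rintro ⟨_, hb⟩
      by_contra hc
      exact absurd (blk_mono J (not_lt.1 hc)) (not_le.2 hb)
    · intro hx
      exact ⟨by omega, blk_lt hj hx le_rfl⟩
  have h3 := congrArg Finset.card h2
  rw [Finset.card_range] at h3
  refine ⟨_, h3.symm.trans h1⟩

/-- The least positive period of a word (`0` if the word is not periodic), defined as its minimal
period under the shift. -/
noncomputable def per (u : ℕ → ℕ) : ℕ :=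
  Function.minimalPeriod (fun v : ℕ → ℕ => fun i => v (i + 1)) u

lemma periodic_iff (u : ℕ → ℕ) (p : ℕ) : Function.Periodic u p ↔ per u ∣ p := by
  have key : ∀ p, (fun v : ℕ → ℕ => fun i => v (i + 1))^[p] u = fun i => u (i + p) := by
    intro p
    induction p with
    | zero => rfl
    | succ p ih =>
      rw [Function.iterate_succ_apply', ih]
      funext i
      show u (i + 1 + p) = u (i + (p + 1))
      congr 1
      omega
  rw [per, ← Function.isPeriodicPt_iff_minimalPeriod_dvd, Function.IsPeriodicPt,
    Function.IsFixedPt, key, funext_iff]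
  rfl

/-- A word with least period `p` and `n = d * p` is the `d`-fold repetition of a primitive word of
length `p`; its content is compatible with `J` only if `d` divides every element of `J`. -/
lemma words_fiber {d p : ℕ} (hd : 0 < d) {J : Finset ℕ} (hJ : J ⊆ Finset.Ioo 0 (d * p)) :
    {u | u ∈ words (d * p) J ∧ per u = p} =
      if ∀ j ∈ J, d ∣ j then primWords p (divSet J d) else ∅ := by
  have hper : ∀ u, per u = p → Function.Periodic u p := fun u h =>
    (periodic_iff u p).2 (by rw [h])
  split_ifs with hdiv
  · ext u
    constructor
    · rintro ⟨⟨_, h2⟩, h3⟩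
      refine ⟨⟨hper u h3, ?_⟩, fun q hq => ?_⟩
      · rw [map_range_periodic (hper u h3), map_range_blk hd hdiv] at h2
        ext v
        have := congrArg (Multiset.count v) h2
        rw [Multiset.count_nsmul, Multiset.count_nsmul] at this
        exact Nat.eq_of_mul_eq_mul_left hd this
      · rw [← h3]
        exact (periodic_iff u q).1 hq
    · rintro ⟨⟨h1, h2⟩, h3⟩
      refine ⟨⟨(periodic_iff u _).2 (((periodic_iff u p).1 h1).mul_left d), ?_⟩, ?_⟩
      · rw [map_range_periodic h1, map_range_blk hd hdiv, h2]
      · exact Nat.dvd_antisymm ((periodic_iff u p).1 h1) (h3 _ ((periodic_iff u _).2 dvd_rfl))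
  · refine Set.eq_empty_of_forall_notMem ?_
    rintro u ⟨⟨_, h2⟩, h3⟩
    rw [map_range_periodic (hper u h3)] at h2
    exact hdiv (dvd_of_map_range_blk hJ h2.symm)

/-- Classifying words by their least period `n / d` gives
`α_n(J) = ∑ (n/d) α^cyc_{n/d}(J/d)`, over the `d ∣ n` that divide all elements of `J`. -/
lemma alphaP_eq {n : ℕ} (hn : 0 < n) {J : Finset ℕ} (hJ : J ⊆ Finset.Ioo 0 n) :
    alphaP n J = ∑ d ∈ n.divisors,
      if ∀ j ∈ J, d ∣ j then (n / d) * alphaC (n / d) (divSet J d) else 0 := by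
  have : NeZero n := ⟨hn.ne'⟩
  have hfin := words_finite (n := n) J
  rw [← words_ncard (n := n) J, Set.ncard_eq_toFinset_card _ hfin,
    Finset.card_eq_sum_card_fiberwise (f := per) (t := n.divisors), ← Nat.sum_div_divisors]
  · refine Finset.sum_congr rfl fun d hd => ?_
    obtain ⟨p, hp⟩ := Nat.dvd_of_mem_divisors hd
    have hd0 : 0 < d := Nat.pos_of_mem_divisors hd
    have hp0 : 0 < p := Nat.pos_of_ne_zero fun h => by simp [h] at hp; omega
    have : NeZero p := ⟨hp0.ne'⟩
    have hnd : n / d = p := by rw [hp, Nat.mul_div_cancel_left _ hd0]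
    rw [hnd]
    have h1 := words_fiber (p := p) hd0 (hp ▸ hJ)
    rw [← hp] at h1
    rw [← Set.ncard_coe_finset]
    have h2 : ((hfin.toFinset.filter fun u => per u = p : Finset (ℕ → ℕ)) : Set (ℕ → ℕ)) =
        {u | u ∈ words n J ∧ per u = p} := by
      ext u
      simp
    rw [h2, h1]
    split_ifs with h
    · exact primWords_ncard _
    · simp
  · intro u hu
    have hu' : u ∈ words n J := by simpa using hu
    simp only [Finset.mem_coe, Nat.mem_divisors]
    exact ⟨(periodic_iff u n).1 hu'.1, hn.ne'⟩

/-! ### Signed counts and complementation -/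

lemma sum_Icc_sign (K I : Finset ℕ) :
    ∑ J ∈ I.powerset, (if K ⊆ J then (-1 : ℤ) ^ J.card else 0) =
      if K = I then (-1) ^ I.card else 0 := by
  rw [← Finset.sum_filter]
  by_cases hKI : K ⊆ I
  · have h : ∑ J ∈ I.powerset.filter (fun J => K ⊆ J), (-1 : ℤ) ^ J.card =
        ∑ L ∈ (I \ K).powerset, (-1 : ℤ) ^ K.card * (-1) ^ L.card := by
      refine Finset.sum_nbij' (fun J => J \ K) (fun L => K ∪ L) ?_ ?_ ?_ ?_ ?_
      · intro J hJ
        simp only [Finset.mem_filter, Finset.mem_powerset] at hJ ⊢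
        exact Finset.sdiff_subset_sdiff hJ.1 le_rfl
      · intro L hL
        simp only [Finset.mem_filter, Finset.mem_powerset] at hL ⊢
        exact ⟨Finset.union_subset hKI (hL.trans Finset.sdiff_subset), Finset.subset_union_left⟩
      · intro J hJ
        simp only [Finset.mem_filter, Finset.mem_powerset] at hJ
        exact Finset.union_sdiff_of_subset hJ.2
      · intro L hL
        simp only [Finset.mem_powerset] at hL
        ext i
        have := @hL i
        simp only [Finset.mem_sdiff, Finset.mem_union] at *
        tauto
      · intro J hJ
        simp only [Finset.mem_filter, Finset.mem_powerset] at hJ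
        rw [← pow_add, add_comm, Finset.card_sdiff_add_card_eq_card hJ.2]
    rw [h, ← Finset.mul_sum, Finset.sum_powerset_neg_one_pow_card]
    by_cases he : K = I
    · simp [he]
    · have : I \ K ≠ ∅ := fun h0 => he (hKI.antisymm (Finset.sdiff_eq_empty_iff_subset.1 h0))
      simp [he, this]
  · rw [Finset.sum_eq_zero, if_neg fun h => hKI h.subset]
    intro J hJ
    simp only [Finset.mem_filter, Finset.mem_powerset] at hJ
    exact absurd (hJ.2.trans hJ.1) hKI

/-- Inclusion–exclusion between descent sets equal to `I` and descent sets contained in `J`. -/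
lemma sign_mul_card {n : ℕ} (P : Equiv.Perm (Fin n) → Prop) (I : Finset ℕ) :
    (-1 : ℤ) ^ I.card * Nat.card {π : Equiv.Perm (Fin n) // P π ∧ descSet π = I} =
      ∑ J ∈ I.powerset,
        (-1 : ℤ) ^ J.card * Nat.card {π : Equiv.Perm (Fin n) // P π ∧ descSet π ⊆ J} := by
  classical
  have hc : ∀ Q : Equiv.Perm (Fin n) → Prop,
      ((Nat.card {π : Equiv.Perm (Fin n) // P π ∧ Q π} : ℕ) : ℤ) =
        ∑ π ∈ Finset.univ.filter P, if Q π then 1 else 0 := by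
    intro Q
    rw [Nat.card_eq_fintype_card, Fintype.card_subtype, Finset.sum_boole, Finset.filter_filter]
  simp only [hc, Finset.mul_sum]
  rw [Finset.sum_comm]
  refine Finset.sum_congr rfl fun π _ => ?_
  have := sum_Icc_sign (descSet π) I
  simp only [mul_ite, mul_one, mul_zero]
  exact this.symm

/-- The signed count `(-1)^|I| β^cyc_n(I)`. -/
noncomputable def sbetaC (n : ℕ) (I : Finset ℕ) : ℤ := (-1) ^ I.card * betaC n I

lemma sbetaC_eq (n : ℕ) (I : Finset ℕ) :
    sbetaC n I = ∑ J ∈ I.powerset, (-1 : ℤ) ^ J.card * alphaC n J :=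
  sign_mul_card (n := n) IsFullCycle I

lemma sbetaP_eq (n : ℕ) (I : Finset ℕ) :
    (-1 : ℤ) ^ I.card * betaP n I = ∑ J ∈ I.powerset, (-1 : ℤ) ^ J.card * alphaP n J := by
  have := sign_mul_card (n := n) (fun _ => True) I
  simp only [true_and] at this
  exact this

/-- Subsets of `I` consisting of multiples of `d` correspond to subsets of `I/d`. -/
lemma sum_divSet {I : Finset ℕ} {d : ℕ} (hd : 0 < d) (F : Finset ℕ → ℤ) :
    ∑ J ∈ I.powerset.filter (fun J => ∀ j ∈ J, d ∣ j), (-1 : ℤ) ^ J.card * F (divSet J d) =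
      ∑ K ∈ (divSet I d).powerset, (-1 : ℤ) ^ K.card * F K := by
  have hinj : Function.Injective (d * ·) := fun a b h => Nat.eq_of_mul_eq_mul_left hd h
  have hinv : ∀ J : Finset ℕ, (∀ j ∈ J, d ∣ j) → (divSet J d).image (d * ·) = J := by
    intro J hJ
    ext i
    simp only [Finset.mem_image, mem_divSet hd]
    constructor
    · rintro ⟨k, hk, rfl⟩
      exact hk
    · intro hi
      obtain ⟨k, rfl⟩ := hJ i hi
      exact ⟨k, hi, rfl⟩
  refine Finset.sum_nbij' (fun J => divSet J d) (fun K => K.image (d * ·)) ?_ ?_ ?_ ?_ ?_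
  · intro J hJ
    simp only [Finset.mem_filter, Finset.mem_powerset] at hJ ⊢
    intro k hk
    rw [mem_divSet hd] at hk ⊢
    exact hJ.1 hk
  · intro K hK
    simp only [Finset.mem_filter, Finset.mem_powerset] at hK ⊢
    constructor
    · intro i hi
      obtain ⟨k, hk, rfl⟩ := Finset.mem_image.1 hi
      exact (mem_divSet hd).1 (hK hk)
    · intro i hi
      obtain ⟨k, hk, rfl⟩ := Finset.mem_image.1 hi
      exact dvd_mul_right _ _
  · intro J hJ
    exact hinv J (Finset.mem_filter.1 hJ).2
  · intro K hK
    ext k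
    rw [mem_divSet hd]
    exact Finset.mem_image.trans
      ⟨fun ⟨a, ha, he⟩ => hinj he ▸ ha, fun h => ⟨k, h, rfl⟩⟩
  · intro J hJ
    congr 2
    conv_lhs => rw [← hinv J (Finset.mem_filter.1 hJ).2]
    exact Finset.card_image_of_injective _ hinj

/-- The signed form of `alphaP_eq`:
`(-1)^|I| β_n(I) = ∑_{d ∣ n} (n/d) (-1)^|I/d| β^cyc_{n/d}(I/d)`. -/
lemma sbetaP_eq_sum {n : ℕ} (hn : 0 < n) {I : Finset ℕ} (hI : I ⊆ Finset.Ioo 0 n) :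
    (-1 : ℤ) ^ I.card * betaP n I =
      ∑ d ∈ n.divisors, ((n / d : ℕ) : ℤ) * sbetaC (n / d) (divSet I d) := by
  rw [sbetaP_eq]
  have h : ∀ J ∈ I.powerset, (-1 : ℤ) ^ J.card * alphaP n J = ∑ d ∈ n.divisors,
      if ∀ j ∈ J, d ∣ j then
        ((n / d : ℕ) : ℤ) * ((-1) ^ J.card * alphaC (n / d) (divSet J d)) else 0 := by
    intro J hJ
    rw [alphaP_eq hn ((Finset.mem_powerset.1 hJ).trans hI), Nat.cast_sum, Finset.mul_sum]
    refine Finset.sum_congr rfl fun d _ => ?_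
    split_ifs
    · push_cast; ring
    · simp
  rw [Finset.sum_congr rfl h, Finset.sum_comm]
  refine Finset.sum_congr rfl fun d hd => ?_
  rw [← Finset.sum_filter, ← Finset.mul_sum, sbetaC_eq]
  congr 1
  exact sum_divSet (Nat.pos_of_mem_divisors hd) fun K => (alphaC (n / d) K : ℤ)

lemma descSet_rev {n : ℕ} (π : Equiv.Perm (Fin n)) :
    descSet (Fin.revPerm * π) = Finset.Ioo 0 n \ descSet π := by
  ext i
  rw [Finset.mem_sdiff, mem_descSet, mem_descSet, Finset.mem_Ioo]
  constructor
  · rintro ⟨h0, h1, h2⟩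
    refine ⟨⟨h0, h1⟩, fun ⟨_, _, h3⟩ => ?_⟩
    simp only [Equiv.Perm.mul_apply, Fin.revPerm_apply, Fin.rev_lt_rev] at h2
    exact lt_asymm h2 h3
  · rintro ⟨⟨h0, h1⟩, h2⟩
    refine ⟨h0, h1, ?_⟩
    simp only [Equiv.Perm.mul_apply, Fin.revPerm_apply, Fin.rev_lt_rev]
    refine lt_of_le_of_ne (not_lt.1 fun h => h2 ⟨h0, h1, h⟩) fun he => ?_
    have := congrArg Fin.val (π.injective he)
    simp only at this
    omega

lemma betaP_compl {n : ℕ} {I : Finset ℕ} (hI : I ⊆ Finset.Ioo 0 n) :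
    betaP n (Finset.Ioo 0 n \ I) = betaP n I := by
  refine (Nat.card_congr ((Equiv.mulLeft Fin.revPerm).subtypeEquiv fun π => ?_)).symm
  rw [Equiv.coe_mulLeft, descSet_rev]
  constructor
  · rintro rfl; rfl
  · intro h
    rw [← Finset.sdiff_sdiff_eq_self (descSet_subset_Ioo π), h, Finset.sdiff_sdiff_eq_self hI]

lemma divSet_subset {n d : ℕ} (hd : d ∈ n.divisors) {I : Finset ℕ} (hI : I ⊆ Finset.Ioo 0 n) :
    divSet I d ⊆ Finset.Ioo 0 (n / d) := by
  have hd0 := Nat.pos_of_mem_divisors hd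
  obtain ⟨p, rfl⟩ := Nat.dvd_of_mem_divisors hd
  rw [Nat.mul_div_cancel_left _ hd0]
  intro k hk
  have := Finset.mem_Ioo.1 (hI ((mem_divSet hd0).1 hk))
  exact Finset.mem_Ioo.2 ⟨Nat.pos_of_mul_pos_left this.1, Nat.lt_of_mul_lt_mul_left this.2⟩

lemma divSet_compl {n d : ℕ} (hd : d ∈ n.divisors) (I : Finset ℕ) :
    divSet (Finset.Ioo 0 n \ I) d = Finset.Ioo 0 (n / d) \ divSet I d := by
  have hd0 := Nat.pos_of_mem_divisors hd
  obtain ⟨p, rfl⟩ := Nat.dvd_of_mem_divisors hd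
  rw [Nat.mul_div_cancel_left _ hd0]
  ext k
  simp only [mem_divSet hd0, Finset.mem_sdiff, Finset.mem_Ioo, Nat.mul_lt_mul_left hd0,
    Nat.mul_pos_iff_of_pos_left hd0]

lemma divSet_divSet {a b : ℕ} (ha : 0 < a) (hb : 0 < b) (I : Finset ℕ) :
    divSet (divSet I a) b = divSet I (a * b) := by
  ext k
  rw [mem_divSet hb, mem_divSet ha, mem_divSet (Nat.mul_pos ha hb), mul_assoc]

lemma sign_compl {n : ℕ} (hn : 0 < n) {I : Finset ℕ} (hI : I ⊆ Finset.Ioo 0 n) :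
    (-1 : ℤ) ^ (Finset.Ioo 0 n \ I).card = -((-1) ^ n * (-1) ^ I.card) := by
  have h := Finset.card_sdiff_add_card_eq_card hI
  rw [Nat.card_Ioo] at h
  have h1 : n + I.card = (Finset.Ioo 0 n \ I).card + 1 + 2 * I.card := by omega
  rw [← pow_add, h1, pow_add, pow_succ, pow_mul]
  simp

/-- The complementation symmetry of `β_n`, written in terms of cyclic counts. -/
lemma sum_compl {n : ℕ} (hn : 0 < n) {I : Finset ℕ} (hI : I ⊆ Finset.Ioo 0 n) :
    ∑ d ∈ n.divisors, ((n / d : ℕ) : ℤ) * (sbetaC (n / d) (divSet I d) +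
      (-1) ^ n * sbetaC (n / d) (Finset.Ioo 0 (n / d) \ divSet I d)) = 0 := by
  have h1 := sbetaP_eq_sum hn hI
  have h2 := sbetaP_eq_sum hn (Finset.sdiff_subset (s := Finset.Ioo 0 n) (t := I))
  rw [betaP_compl hI, sign_compl hn hI] at h2
  rw [Finset.sum_congr rfl fun d hd => by rw [divSet_compl hd]] at h2
  simp only [mul_add, Finset.sum_add_distrib, mul_left_comm _ ((-1 : ℤ) ^ n)]
  rw [← h1, ← Finset.mul_sum, ← h2]
  have : (-1 : ℤ) ^ n * (-1) ^ n = 1 := by rw [← mul_pow]; simp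
  linear_combination (-(-1) ^ I.card * (betaP n I : ℤ)) * this

lemma divSet_one (I : Finset ℕ) : divSet I 1 = I := by
  ext k
  rw [mem_divSet one_pos, one_mul]

/-- For odd `n`, the number `β^cyc_n(I)` is invariant under complementing `I` (whose size changes
by an even number): all terms with `d > 1` in `sum_compl` vanish by induction. -/
lemma sbetaC_compl_odd (n : ℕ) : Odd n → ∀ I ⊆ Finset.Ioo 0 n,
    sbetaC n (Finset.Ioo 0 n \ I) = sbetaC n I := by
  induction n using Nat.strong_induction_on with
  | _ n ih =>
    intro hn I hI
    have h := sum_compl hn.pos hI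
    rw [Finset.sum_eq_single 1] at h
    · rw [divSet_one, Nat.div_one, hn.neg_one_pow] at h
      have h0 : (n : ℤ) ≠ 0 := by exact_mod_cast hn.pos.ne'
      have := (mul_eq_zero.1 h).resolve_left h0
      linarith
    · intro d hd hd1
      have hd0 := Nat.pos_of_mem_divisors hd
      rw [ih (n / d) (Nat.div_lt_self hn.pos (by omega))
        (hn.of_dvd_nat (Nat.div_dvd_of_dvd (Nat.dvd_of_mem_divisors hd))) _ (divSet_subset hd hI),
        hn.neg_one_pow]
      ring
    · intro h1
      exact absurd (Nat.one_mem_divisors.2 hn.pos.ne') h1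

lemma sum_divisors_two_mul {m : ℕ} (hm : Odd m) (g : ℕ → ℤ) :
    ∑ d ∈ (2 * m).divisors, g d = ∑ d ∈ m.divisors, (g d + g (2 * d)) := by
  have hu : (2 * m).divisors = m.divisors ∪ m.divisors.image (2 * ·) := by
    ext d
    have hm0 := hm.pos.ne'
    simp only [Finset.mem_union, Finset.mem_image, Nat.mem_divisors]
    constructor
    · rintro ⟨h, _⟩
      rcases Nat.even_or_odd' d with ⟨e, rfl | he⟩
      · exact Or.inr ⟨e, ⟨Nat.dvd_of_mul_dvd_mul_left two_pos h, hm0⟩, rfl⟩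
      · have ho : Odd d := ⟨e, he⟩
        exact Or.inl ⟨(Nat.coprime_two_right.2 ho).dvd_of_dvd_mul_left h, hm0⟩
    · rintro (⟨h, _⟩ | ⟨e, ⟨h, _⟩, rfl⟩)
      · exact ⟨h.mul_left 2, by omega⟩
      · exact ⟨Nat.mul_dvd_mul_left 2 h, by omega⟩
  rw [hu, Finset.sum_union, Finset.sum_image, Finset.sum_add_distrib]
  · intro a _ b _ h
    simpa using h
  · rw [Finset.disjoint_left]
    intro d hd hd'
    obtain ⟨e, _, rfl⟩ := Finset.mem_image.1 hd'
    have ho : Odd (2 * e) := hm.of_dvd_nat (Nat.dvd_of_mem_divisors hd)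
    exact Nat.not_odd_iff_even.2 (even_two_mul e) ho

/-- The signed form of the result, valid for every `I`: in the identity `sum_compl` for `2m`, the
terms for `d` and `2d` cancel for each divisor `d > 1` of `m`, by induction, hence also for
`d = 1`. -/
lemma sbetaC_compl_two_mul (m : ℕ) : Odd m → ∀ I ⊆ Finset.Ioo 0 (2 * m),
    sbetaC (2 * m) I + sbetaC (2 * m) (Finset.Ioo 0 (2 * m) \ I) = -sbetaC m (divSet I 2) := by
  induction m using Nat.strong_induction_on with
  | _ m ih =>
    intro hm I hI
    have hm0 := hm.pos
    have hmem : ∀ d ∈ m.divisors, d ∈ (2 * m).divisors ∧ 2 * d ∈ (2 * m).divisors := by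
      intro d hd
      have := Nat.dvd_of_mem_divisors hd
      exact ⟨Nat.mem_divisors.2 ⟨this.mul_left 2, by omega⟩,
        Nat.mem_divisors.2 ⟨Nat.mul_dvd_mul_left 2 this, by omega⟩⟩
    have hdiv : ∀ d ∈ m.divisors, 2 * m / d = 2 * (m / d) ∧ 2 * m / (2 * d) = m / d := by
      intro d hd
      exact ⟨Nat.mul_div_assoc 2 (Nat.dvd_of_mem_divisors hd), Nat.mul_div_mul_left _ _ two_pos⟩
    have hodd : ∀ d ∈ m.divisors, Odd (m / d) := fun d hd =>
      hm.of_dvd_nat (Nat.div_dvd_of_dvd (Nat.dvd_of_mem_divisors hd))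
    have hdbl : ∀ d ∈ m.divisors, sbetaC (m / d) (Finset.Ioo 0 (m / d) \ divSet I (2 * d)) =
        sbetaC (m / d) (divSet I (2 * d)) := by
      intro d hd
      refine sbetaC_compl_odd _ (hodd d hd) _ ?_
      rw [← (hdiv d hd).2]
      exact divSet_subset (hmem d hd).2 hI
    have h := sum_compl (by omega) hI
    rw [sum_divisors_two_mul hm, Finset.sum_eq_single 1] at h
    · have h1 := Nat.one_mem_divisors.2 hm0.ne'
      have hd1 := hdbl 1 h1
      rw [(hdiv 1 h1).1, (hdiv 1 h1).2, hd1, Nat.div_one, divSet_one, mul_one,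
        (even_two_mul m).neg_one_pow, one_mul, one_mul] at h
      have h0 : (m : ℤ) ≠ 0 := by exact_mod_cast hm0.ne'
      push_cast at h
      apply mul_left_cancel₀ h0
      linarith
    · intro d hd hd1
      have hd0 := Nat.pos_of_mem_divisors hd
      have h2 := ih (m / d) (Nat.div_lt_self hm0 (by omega)) (hodd d hd) (divSet I d) (by
        rw [← (hdiv d hd).1]
        exact divSet_subset (hmem d hd).1 hI)
      rw [divSet_divSet hd0 two_pos, mul_comm d 2] at h2
      rw [(hdiv d hd).1, (hdiv d hd).2, hdbl d hd, (even_two_mul m).neg_one_pow, one_mul, one_mul,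
        h2]
      push_cast
      ring
    · intro h1
      exact absurd (Nat.one_mem_divisors.2 hm0.ne') h1

lemma card_eq_card_odd_add (I : Finset ℕ) :
    I.card = (I.filter fun i => Odd i).card + (divSet I 2).card := by
  have h1 : (divSet I 2).card = (I.filter fun i => ¬ Odd i).card := by
    unfold divSet
    rw [Finset.card_image_of_injOn]
    · congr 1
      refine Finset.filter_congr fun i _ => ?_
      rw [Nat.not_odd_iff_even, even_iff_two_dvd]
    · intro a ha b hb h
      have h1 := (Finset.mem_filter.1 ha).2
      have h2 := (Finset.mem_filter.1 hb).2
      have h' : a / 2 = b / 2 := h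
      omega
  rw [h1, Finset.card_filter_add_card_filter_not]

/-- If `n ≡ 2 (mod 4)` and `I ⊆ [n-1]` has an odd number of odd elements, then
`β^cyc_n(I) - β^cyc_n([n-1] \ I) = β^cyc_{n/2}(I/2)`. -/
theorem betaC_sub_betaC_compl (n : ℕ) (hn : n % 4 = 2) (I : Finset ℕ)
    (hI : I ⊆ Finset.Ioo 0 n) (hodd : Odd (I.filter fun i => Odd i).card) :
    (betaC n I : ℤ) - betaC n (Finset.Ioo 0 n \ I) = betaC (n / 2) (divSet I 2) := by
  obtain ⟨m, rfl⟩ : ∃ m, n = 2 * m := ⟨n / 2, by omega⟩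
  have hm : Odd m := Nat.odd_iff.2 (by omega)
  have hm0 := hm.pos
  have h := sbetaC_compl_two_mul m hm I hI
  rw [Nat.mul_div_cancel_left _ two_pos]
  unfold sbetaC at h
  rw [sign_compl (by omega) hI, (even_two_mul m).neg_one_pow, card_eq_card_odd_add I, pow_add,
    hodd.neg_one_pow] at h
  have hs : (-1 : ℤ) ^ (divSet I 2).card ≠ 0 := pow_ne_zero _ (by norm_num)
  apply mul_left_cancel₀ hs
  linarith
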